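/- Let a ∈ ℝ^{m-1}, let v ∈ ℝ^m with |v| ≤ 1, and let δ > 0. Then ∫_{{t′ ∈ ℝ^{m-1} : |t′−a| > δ}} ∫_{𝕊^{m-1}} P_H(x,(t′,0),u,v) dS(u) dt′ → 0 as x → (a,0) with x ∈ ℝ^m_+. -/

import Mathlib

noncomputable section

open MeasureTheory Metric Filter Topology
open scoped RealInnerProductSpace

/-- `ℝ^m` as a Euclidean space. -/
abbrev Evec (m : ℕ) : Type := EuclideanSpace ℝ (Fin m)

/-- Partial derivative in the `i`-th coordinate direction. -/
def pdv {m : ℕ} (i : Fin m) (f : Evec m → ℝ) (x : Evec m) : ℝ :=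
  fderiv ℝ f x (EuclideanSpace.single i 1)

/-- Euclidean Laplacian on `ℝ^m`. -/
def lapl {m : ℕ} (f : Evec m → ℝ) (x : Evec m) : ℝ :=
  ∑ i : Fin m, pdv i (pdv i f) x

/-- `p` is a real-valued polynomial function on `ℝ^m`, homogeneous of degree `k` and
harmonic; i.e. `p ∈ ℋ_k`. -/
def IsHk (m k : ℕ) (p : Evec m → ℝ) : Prop :=
  (∃ P : MvPolynomial (Fin m) ℝ, ∀ x : Evec m, p x = MvPolynomial.eval (fun i => x i) P) ∧
  (∀ (c : ℝ) (x : Evec m), p (c • x) = c ^ k * p x) ∧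
  (∀ x : Evec m, lapl p x = 0)

/-- The surface measure `dS` on the unit sphere `𝕊^{m-1}`, as a measure on `ℝ^m`. -/
def sphereM (m : ℕ) : Measure (Evec m) :=
  Measure.map Subtype.val ((volume : Measure (Evec m)).toSphere)

/-- `ω_m`, the surface area of the unit sphere `𝕊^{m-1}`. -/
def omegaS (m : ℕ) : ℝ := (sphereM m Set.univ).toReal

/-- The constant `c_{m,k} = 2(m+2k-2)/((m-2)ω_m)`. -/
def cmk (m k : ℕ) : ℝ := 2 * ((m : ℝ) + 2 * k - 2) / (((m : ℝ) - 2) * omegaS m)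

/-- The reflection `R_a(u) = u - 2⟨a,u⟩a/|a|²` (in Clifford notation `a u a/|a|²`). -/
def reflv {m : ℕ} (a u : Evec m) : Evec m :=
  u - (2 * ⟪a, u⟫ / ‖a‖ ^ 2) • a

/-- `dim ℋ_k`. -/
def hdim (m k : ℕ) : ℕ :=
  Nat.choose (m + k - 1) (m - 1) - Nat.choose (m + k - 3) (m - 1)

/-- `Z` is the reproducing kernel `Z_k` of `ℋ_k` on the unit sphere: a symmetric,
rotation invariant kernel, bounded by `dim ℋ_k` on the unit ball, belonging to `ℋ_k`
in the first variable and reproducing elements of `ℋ_k` from their spherical values. -/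
def IsZk (m k : ℕ) (Z : Evec m → Evec m → ℝ) : Prop :=
  (∀ v : Evec m, IsHk m k (fun u => Z u v)) ∧
  (∀ p : Evec m → ℝ, IsHk m k p → ∀ v : Evec m, (∫ u, Z u v * p u ∂(sphereM m)) = p v) ∧
  (∀ u v : Evec m, Z u v = Z v u) ∧
  (∀ u v : Evec m, ‖u‖ ≤ 1 → ‖v‖ ≤ 1 → |Z u v| ≤ (hdim m k : ℝ)) ∧
  (∀ (A : Evec m ≃ₗᵢ[ℝ] Evec m) (u v : Evec m), Z (A u) (A v) = Z u v)

/-- The point `(x', y) ∈ ℝ^{d+1}` with first `d` coordinates `x'` and last coordinate `y`. -/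
def upP (d : ℕ) (x' : Evec d) (y : ℝ) : Evec (d + 1) :=
  (EuclideanSpace.equiv (Fin (d + 1)) ℝ).symm
    (Fin.snoc (⇑(EuclideanSpace.equiv (Fin d) ℝ) x') y)

/-- The first `d` coordinates of a point of `ℝ^{d+1}`. -/
def downP (d : ℕ) (x : Evec (d + 1)) : Evec d :=
  (EuclideanSpace.equiv (Fin d) ℝ).symm (fun i => x (Fin.castSucc i))

/-- The last coordinate of a point of `ℝ^{d+1}`. -/
def lastP (d : ℕ) (x : Evec (d + 1)) : ℝ := x (Fin.last d)

/-- The Poisson kernel `P_H` for bosonic Laplacians in the upper half-space `ℝ^{d+1}_+`,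
`P_H(x,t,u,v) = c_{m,k} (y/|x-t|^m) Z_k(R_{x-t}(u), v)` with `m = d+1`, `x = (x',y)`,
`t = (t',0)`. -/
def PH (d k : ℕ) (Z : Evec (d + 1) → Evec (d + 1) → ℝ) (x' : Evec d) (y : ℝ)
    (t' : Evec d) (u v : Evec (d + 1)) : ℝ :=
  cmk (d + 1) k * (y / ‖upP d x' y - upP d t' 0‖ ^ (d + 1)) *
    Z (reflv (upP d x' y - upP d t' 0) u) v

/-- The Poisson integral `P_H[f]` in the upper half-space. -/
def PHint (d k : ℕ) (Z : Evec (d + 1) → Evec (d + 1) → ℝ)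
    (f : Evec d → Evec (d + 1) → ℝ) (x' : Evec d) (y : ℝ) (v : Evec (d + 1)) : ℝ :=
  ∫ t' : Evec d, (∫ u, PH d k Z x' y t' u v * f t' u ∂(sphereM (d + 1)))

/-- The Poisson kernel `P_B` for bosonic Laplacians in the unit ball. -/
def PB (m k : ℕ) (Z : Evec m → Evec m → ℝ) (x ζ ω ν : Evec m) : ℝ :=
  (cmk m k / 2) * ((1 - ‖x‖ ^ 2) / ‖x - ζ‖ ^ m) * Z (reflv (x - ζ) ω) ν

/-- The Poisson integral `P_B[h]` in the unit ball. -/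
def PBint (m k : ℕ) (Z : Evec m → Evec m → ℝ) (h : Evec m → Evec m → ℝ)
    (x ν : Evec m) : ℝ :=
  ∫ ζ, (∫ ω, PB m k Z x ζ ω ν * h ζ ω ∂(sphereM m)) ∂(sphereM m)

/-- Partial derivative in the first (`x`) variable. -/
def pd1 {m : ℕ} (i : Fin m) (f : Evec m → Evec m → ℝ) : Evec m → Evec m → ℝ :=
  fun x u => fderiv ℝ (fun x₁ => f x₁ u) x (EuclideanSpace.single i 1)

/-- Partial derivative in the second (`u`) variable. -/
def pd2 {m : ℕ} (i : Fin m) (f : Evec m → Evec m → ℝ) : Evec m → Evec m → ℝ :=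
  fun x u => fderiv ℝ (fun u₁ => f x u₁) u (EuclideanSpace.single i 1)

/-- The bosonic Laplacian `𝒟_k`. -/
def Dk (m k : ℕ) (f : Evec m → Evec m → ℝ) : Evec m → Evec m → ℝ := fun x u =>
  (∑ i : Fin m, pd1 i (pd1 i f) x u)
    - (4 / ((m : ℝ) + 2 * k - 2)) *
        ∑ i : Fin m, ∑ j : Fin m, u i * pd1 i (pd2 j (pd1 j f)) x u
    + (4 * ‖u‖ ^ 2 / (((m : ℝ) + 2 * k - 2) * ((m : ℝ) + 2 * k - 4))) *
        ∑ i : Fin m, ∑ j : Fin m, pd2 i (pd1 i (pd2 j (pd1 j f))) x u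

/-- `f ∈ C²(Ω×𝔹^m, ℋ_k)`: twice continuously differentiable on `Ω × 𝔹^m` and, for each
fixed `x ∈ Ω`, coinciding in the second variable with an element of `ℋ_k`. -/
def C2Hk (m k : ℕ) (Ω : Set (Evec m)) (f : Evec m → Evec m → ℝ) : Prop :=
  ContDiffOn ℝ 2 (fun q : Evec m × Evec m => f q.1 q.2) (Ω ×ˢ ball (0 : Evec m) 1) ∧
  ∀ x ∈ Ω, ∃ q, IsHk m k q ∧ ∀ u ∈ closedBall (0 : Evec m) 1, f x u = q u

/-- The `L^p` norm `(∫_{ℝ^{m-1}} ∫_{𝕊^{m-1}} |f(x',u)|^p dS(u) dx')^{1/p}` (`m = d+1`),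
valued in `ℝ≥0∞`. -/
def lpH (d : ℕ) (p : ℝ) (f : Evec d → Evec (d + 1) → ℝ) : ENNReal :=
  (∫⁻ x' : Evec d, ∫⁻ u, ENNReal.ofReal (|f x' u| ^ p) ∂(sphereM (d + 1))) ^ (1 / p)

/-- `f ∈ L^p(ℝ^{m-1}×𝔹^m, ℋ_k)` (`m = d+1`). -/
def MemLpH (d k : ℕ) (p : ℝ) (f : Evec d → Evec (d + 1) → ℝ) : Prop :=
  Measurable (fun q : Evec d × Evec (d + 1) => f q.1 q.2) ∧
  (∀ x' : Evec d, ∃ q, IsHk (d + 1) k q ∧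
    ∀ u ∈ closedBall (0 : Evec (d + 1)) 1, f x' u = q u) ∧
  lpH d p f < ⊤

/-- The `L^p` norm `(∫_{𝕊^{m-1}} ∫_{𝕊^{m-1}} |h(ζ,ω)|^p dS(ω) dS(ζ))^{1/p}`,
valued in `ℝ≥0∞`. -/
def lpS (m : ℕ) (p : ℝ) (h : Evec m → Evec m → ℝ) : ENNReal :=
  (∫⁻ ζ, ∫⁻ ω, ENNReal.ofReal (|h ζ ω| ^ p) ∂(sphereM m) ∂(sphereM m)) ^ (1 / p)

/-- `h ∈ L^p(𝕊^{m-1}×𝔹^m, ℋ_k)`. -/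
def MemLpS (m k : ℕ) (p : ℝ) (h : Evec m → Evec m → ℝ) : Prop :=
  Measurable (fun q : Evec m × Evec m => h q.1 q.2) ∧
  (∀ ζ : Evec m, ‖ζ‖ = 1 → ∃ q, IsHk m k q ∧
    ∀ ω ∈ closedBall (0 : Evec m) 1, h ζ ω = q ω) ∧
  lpS m p h < ⊤

/-- Iterated partial derivative `D_x^α` in the first variable, for a multi-index `α ∈ ℕ^m`. -/
def Dx {m : ℕ} (α : Fin m → ℕ) (f : Evec m → Evec m → ℝ) : Evec m → Evec m → ℝ :=
  (List.finRange m).foldr (fun i g => (pd1 i)^[α i] g) f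

/-- Iterated partial derivative `D_ν^β` in the second variable, for a multi-index `β ∈ ℕ^m`. -/
def Dv {m : ℕ} (β : Fin m → ℕ) (f : Evec m → Evec m → ℝ) : Evec m → Evec m → ℝ :=
  (List.finRange m).foldr (fun i g => (pd2 i)^[β i] g) f

lemma norm_reflv_le {m : ℕ} (a u : Evec m) : ‖reflv a u‖ ≤ ‖u‖ := by
  rcases eq_or_ne a 0 with rfl | ha
  · simp [reflv]
  have ha' : ‖a‖ ^ 2 ≠ 0 := pow_ne_zero _ (norm_ne_zero_iff.mpr ha)
  have h : ‖reflv a u‖ ^ 2 = ‖u‖ ^ 2 := by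
    rw [reflv, norm_sub_sq_real, norm_smul, mul_pow, real_inner_smul_right, real_inner_comm,
      Real.norm_eq_abs, sq_abs]
    field_simp
    ring
  exact (pow_le_pow_iff_left₀ (norm_nonneg _) (norm_nonneg _) two_ne_zero).mp h.le

lemma norm_sub_le_norm_upP_sub (d : ℕ) (x' t' : Evec d) (y s : ℝ) :
    ‖x' - t'‖ ≤ ‖upP d x' y - upP d t' s‖ := by
  refine (pow_le_pow_iff_left₀ (norm_nonneg _) (norm_nonneg _) two_ne_zero).mp ?_
  rw [EuclideanSpace.norm_sq_eq, EuclideanSpace.norm_sq_eq, Fin.sum_univ_castSucc]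
  simp only [upP, PiLp.sub_apply, EuclideanSpace.equiv, PiLp.continuousLinearEquiv_symm_apply,
    PiLp.continuousLinearEquiv_apply, Fin.snoc_castSucc, Fin.snoc_last]
  exact le_add_of_nonneg_right (sq_nonneg _)

instance isFiniteMeasure_sphereM (m : ℕ) : IsFiniteMeasure (sphereM m) := by
  unfold sphereM
  infer_instance

lemma ae_norm_eq_one_sphereM (m : ℕ) : ∀ᵐ u ∂(sphereM m), ‖u‖ = 1 := by
  rw [sphereM, ae_map_iff measurable_subtype_coe.aemeasurable
    (measurableSet_eq_fun measurable_norm measurable_const)]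
  exact Eventually.of_forall fun u => by simp

/-- The spherical integral of `P_H` is dominated by the scalar Poisson kernel. -/
lemma exists_norm_integral_PH_le (d k : ℕ) (Z : Evec (d + 1) → Evec (d + 1) → ℝ)
    (hZ : IsZk (d + 1) k Z) (v : Evec (d + 1)) (hv : ‖v‖ ≤ 1) :
    ∃ C : ℝ, 0 ≤ C ∧ ∀ (x' t' : Evec d) (y : ℝ), 0 < y →
      ‖∫ u, PH d k Z x' y t' u v ∂(sphereM (d + 1))‖ ≤
        C * (y / ‖upP d x' y - upP d t' 0‖ ^ (d + 1)) := by
  refine ⟨|cmk (d + 1) k| * hdim (d + 1) k * (sphereM (d + 1)).real Set.univ,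
    by positivity, fun x' t' y hy => ?_⟩
  have hle : ∀ᵐ u ∂(sphereM (d + 1)), ‖PH d k Z x' y t' u v‖ ≤
      |cmk (d + 1) k| * (y / ‖upP d x' y - upP d t' 0‖ ^ (d + 1)) * hdim (d + 1) k := by
    filter_upwards [ae_norm_eq_one_sphereM (d + 1)] with u hu
    have hq : 0 ≤ y / ‖upP d x' y - upP d t' 0‖ ^ (d + 1) := by positivity
    rw [PH, Real.norm_eq_abs, abs_mul, abs_mul, abs_of_nonneg hq]
    gcongr
    exact hZ.2.2.2.1 _ _ ((norm_reflv_le _ _).trans hu.le) hv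
  refine (norm_integral_le_of_norm_le_const hle).trans (le_of_eq ?_)
  ring

lemma integrable_inv_one_add_norm_sub_pow (d : ℕ) (a : Evec d) :
    Integrable (fun t : Evec d => ((1 + ‖t - a‖) ^ (d + 1))⁻¹) := by
  have h : Integrable (fun t : Evec d => (1 + ‖t‖) ^ (-((d + 1 : ℕ) : ℝ))) :=
    integrable_one_add_norm (by simp)
  refine (h.comp_sub_right a).congr (Eventually.of_forall fun t => ?_)
  simp only
  rw [Real.rpow_neg (by positivity), Real.rpow_natCast]

/-- Away from `a`, the distance to any point close to `a` controls `1 + ‖t - a‖`. -/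
lemma one_add_norm_sub_le {E : Type*} [SeminormedAddCommGroup E] {a t x : E} {δ : ℝ}
    (hδ : 0 < δ) (ht : δ < ‖t - a‖) (hx : ‖x - a‖ < δ / 2) :
    1 + ‖t - a‖ ≤ 2 * (1 + δ) / δ * ‖x - t‖ := by
  have h : ‖t - a‖ ≤ ‖x - t‖ + ‖x - a‖ := by
    rw [norm_sub_rev x t]
    exact norm_sub_le_norm_sub_add_norm_sub t x a
  rw [div_mul_eq_mul_div, le_div_iff₀ hδ]
  nlinarith

/-- Proposition: approximation property of the Poisson kernel `P_H`. -/
theorem stmt_1 (d k : ℕ) (hm : 3 ≤ d + 1) (hk : 1 ≤ k)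
    (Z : Evec (d + 1) → Evec (d + 1) → ℝ) (hZ : IsZk (d + 1) k Z)
    (a : Evec d) (v : Evec (d + 1)) (hv : ‖v‖ ≤ 1) (δ : ℝ) (hδ : 0 < δ) :
    Tendsto
      (fun x : Evec d × ℝ =>
        ∫ t' in {t' : Evec d | δ < ‖t' - a‖},
          (∫ u, PH d k Z x.1 x.2 t' u v ∂(sphereM (d + 1))))
      (𝓝[{x : Evec d × ℝ | 0 < x.2}] (a, 0)) (𝓝 0) := by
  obtain ⟨C, hC, hbound⟩ := exists_norm_integral_PH_le d k Z hZ v hv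
  set K : ℝ := 2 * (1 + δ) / δ
  have hK : 0 < K := by positivity
  set I : ℝ := ∫ t' in {t' : Evec d | δ < ‖t' - a‖}, ((1 + ‖t' - a‖) ^ (d + 1))⁻¹
  have hlim : Tendsto (fun x : Evec d × ℝ => C * K ^ (d + 1) * x.2 * I)
      (𝓝[{x : Evec d × ℝ | 0 < x.2}] (a, 0)) (𝓝 0) := by
    have hcont : Continuous fun x : Evec d × ℝ => C * K ^ (d + 1) * x.2 * I := by fun_prop
    simpa using (hcont.tendsto (a, 0)).mono_left nhdsWithin_le_nhds
  refine squeeze_zero_norm' ?_ hlim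
  have hnear : ∀ᶠ x : Evec d × ℝ in 𝓝[{x : Evec d × ℝ | 0 < x.2}] (a, 0),
      ‖x.1 - a‖ < δ / 2 := by
    have hcont : Continuous fun x : Evec d × ℝ => ‖x.1 - a‖ := by fun_prop
    exact nhdsWithin_le_nhds (hcont.continuousAt.eventually_lt continuousAt_const (by simpa))
  filter_upwards [hnear, self_mem_nhdsWithin] with x hx hy
  rw [← integral_const_mul]
  refine norm_integral_le_of_norm_le
    ((integrable_inv_one_add_norm_sub_pow d a).integrableOn.const_mul _) ?_
  have hmeas : MeasurableSet {t' : Evec d | δ < ‖t' - a‖} :=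
    measurableSet_lt measurable_const (by fun_prop)
  filter_upwards [ae_restrict_mem hmeas] with t ht
  have hdist : 1 + ‖t - a‖ ≤ K * ‖upP d x.1 x.2 - upP d t 0‖ :=
    (one_add_norm_sub_le hδ ht hx).trans
      (mul_le_mul_of_nonneg_left (norm_sub_le_norm_upP_sub d _ _ _ _) hK.le)
  have hpos : 0 < ‖upP d x.1 x.2 - upP d t 0‖ :=
    pos_of_mul_pos_right (lt_of_lt_of_le (by positivity) hdist) hK.le
  have hy' : 0 < x.2 := hy
  calc ‖∫ u, PH d k Z x.1 x.2 t u v ∂(sphereM (d + 1))‖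
      ≤ C * (x.2 / ‖upP d x.1 x.2 - upP d t 0‖ ^ (d + 1)) := hbound _ _ _ hy'
    _ = C * K ^ (d + 1) * x.2 * ((K * ‖upP d x.1 x.2 - upP d t 0‖) ^ (d + 1))⁻¹ := by
        rw [mul_pow]
        field_simp
    _ ≤ C * K ^ (d + 1) * x.2 * ((1 + ‖t - a‖) ^ (d + 1))⁻¹ := by gcongr
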